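/- arXiv:1412.5286 — 2 statements merged into one kernel-verified Lean document; each statement's English description precedes it below -/
import Mathlib

section
/- (Theorem 2.) Let k ≥ 1, let J denote the 2k×2k block-diagonal complex matrix with k copies of diag(i, −i), and fix s ∈ ℂ. Suppose M, N₊, N₋ and M', N₊', N₋' are 2k×2k complex matrices (the unprimed ones are the values of the transfer matrices at s, the primed ones their values at −s̄) satisfying the symmetries J⁻¹M'†J = −M, J⁻¹N₊'†J = N₋, and J⁻¹N₋'†J = N₊. Assume moreover the commutation conditions M·N₊ = N₊·M, M·N₋ = N₋·M, N₊·N₋ = N₋·N₊, and that I + N₊·M and I − N₋·M are invertible. Define G = (I − N₋·M)(I + N₊·M)⁻¹ and G' = (I − N₋'·M')(I + N₊'·M')⁻¹ (the latter is well defined, i.e., I + N₊'·M' and I − N₋'·M' are invertible). Then (J⁻¹G'†J)·G = I, i.e., G~(s)·G(s) = I where X~(s) := J⁻¹X(−s̄)†J. -/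
open Matrix Complex

/-- `Jmat k` is the `2k×2k` block-diagonal complex matrix with `k` copies of `diag(i, −i)`
on the diagonal. -/
noncomputable def Jmat (k : ℕ) : Matrix (Fin (2 * k)) (Fin (2 * k)) ℂ :=
  Matrix.diagonal fun i => if i.val % 2 = 0 then Complex.I else -Complex.I

/-!
The map `X ↦ X~ = J⁻¹X†J` is additive and reverses products, so the symmetries give
`G~(s) = (I − M N₋)⁻¹ (I + M N₊)`. Against `G(s) = (I − N₋M)(I + N₊M)⁻¹` everything cancels once
`(I + M N₊)(I − N₋M) = (I − M N₋)(I + N₊M)`, and the difference of the two sides is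
`[M, N₊ + N₋] − M[N₊, N₋]M`. The factor `I − M N₋` is invertible together with `I − N₋M`.
-/

/-- The twisted adjoint `X~ = J⁻¹ X† J`, for any unit `J` of a monoid with a star operation. A
function of the complex variable enters only through its value at `−s̄`, so `X` stands for that
value. -/
def twistedStar {R : Type*} [Monoid R] [Star R] (J : Rˣ) (X : R) : R :=
  ↑J⁻¹ * star X * ↑J

/-- The input–output transfer function `G = (1 − N₋M)(1 + N₊M)⁻¹` at one point, as a function of
the values of `M`, `N₊` and `N₋` there. `Ring.inverse` makes it `0` when `1 + N₊M` is not
invertible. -/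
noncomputable def transferFunction {R : Type*} [Ring R] (M Np Nm : R) : R :=
  (1 - Nm * M) * Ring.inverse (1 + Np * M)

section TwistedStarMul

variable {R : Type*} [Monoid R] [StarMul R] (J : Rˣ) (X Y : R)

theorem twistedStar_one : twistedStar J (1 : R) = 1 := by
  simp [twistedStar]

theorem twistedStar_mul : twistedStar J (X * Y) = twistedStar J Y * twistedStar J X := by
  simp [twistedStar, mul_assoc]

variable {J X} in
theorem isUnit_twistedStar : IsUnit (twistedStar J X) ↔ IsUnit X := by
  simp [twistedStar]

end TwistedStarMul

section TwistedStarSemiring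

variable {R : Type*} [Semiring R] [StarRing R] (J : Rˣ) (X Y : R)

theorem twistedStar_add : twistedStar J (X + Y) = twistedStar J X + twistedStar J Y := by
  simp [twistedStar, mul_add, add_mul]

theorem twistedStar_inverse :
    twistedStar J (Ring.inverse X) = Ring.inverse (twistedStar J X) := by
  simp [twistedStar, Ring.inverse_mul, Ring.inverse_star, mul_assoc]

end TwistedStarSemiring

theorem twistedStar_sub {R : Type*} [Ring R] [StarRing R] (J : Rˣ) (X Y : R) :
    twistedStar J (X - Y) = twistedStar J X - twistedStar J Y := by
  simp [twistedStar, mul_sub, sub_mul]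

theorem inverse_mul_mul_mul_inverse_eq_one {M₀ : Type*} [MonoidWithZero M₀] {a b c d : M₀}
    (hc : IsUnit c) (hd : IsUnit d) (h : a * b = c * d) :
    Ring.inverse c * a * (b * Ring.inverse d) = 1 :=
  calc Ring.inverse c * a * (b * Ring.inverse d)
      = Ring.inverse c * (a * b) * Ring.inverse d := by simp only [mul_assoc]
    _ = d * Ring.inverse d := by rw [h, Ring.inverse_mul_cancel_left _ _ hc]
    _ = 1 := Ring.mul_inverse_cancel _ hd

section Ring

variable {R : Type*} [Ring R]

theorem isUnit_one_sub_mul_comm {a b : R} : IsUnit (1 - a * b) ↔ IsUnit (1 - b * a) := by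
  -- In the `ℤ`-algebra `R`, the unit `1` lies in the spectrum of `a * b` iff in that of `b * a`.
  simpa [spectrum.mem_iff, not_iff_not] using
    spectrum.unit_mem_mul_comm (R := ℤ) (a := a) (b := b) (r := 1)

theorem isUnit_one_add_mul_comm {a b : R} : IsUnit (1 + a * b) ↔ IsUnit (1 + b * a) := by
  simpa only [mul_neg, neg_mul, sub_neg_eq_add] using isUnit_one_sub_mul_comm (a := a) (b := -b)

theorem one_add_mul_mul_one_sub_mul {M Np Nm : R} (hM : Commute M (Np + Nm))
    (hN : Commute Np Nm) :
    (1 + M * Np) * (1 - Nm * M) = (1 - M * Nm) * (1 + Np * M) := by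
  linear_combination (norm := noncomm_ring) hM.eq - M * hN.eq * M

end Ring

section Symmetry

variable {R : Type*} [Ring R] [StarRing R] {J : Rˣ} {M N M' N' : R}

theorem twistedStar_one_add_mul (hM : twistedStar J M' = -M) (hN : twistedStar J N' = N) :
    twistedStar J (1 + N' * M') = 1 - M * N := by
  rw [twistedStar_add, twistedStar_one, twistedStar_mul, hM, hN, neg_mul, ← sub_eq_add_neg]

theorem twistedStar_one_sub_mul (hM : twistedStar J M' = -M) (hN : twistedStar J N' = N) :
    twistedStar J (1 - N' * M') = 1 + M * N := by
  rw [twistedStar_sub, twistedStar_one, twistedStar_mul, hM, hN, neg_mul, sub_neg_eq_add]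

end Symmetry

theorem transfer_function_sim_unitary_general {R : Type*} [Ring R] [StarRing R] (J : Rˣ)
    {M Np Nm M' Np' Nm' : R} (hM : twistedStar J M' = -M) (hNp : twistedStar J Np' = Nm)
    (hNm : twistedStar J Nm' = Np) (hMN : Commute M (Np + Nm)) (hN : Commute Np Nm)
    (h₁ : IsUnit (1 + Np * M)) (h₂ : IsUnit (1 - Nm * M)) :
    IsUnit (1 + Np' * M') ∧ IsUnit (1 - Nm' * M') ∧
      twistedStar J (transferFunction M' Np' Nm') * transferFunction M Np Nm = 1 := by
  have hp := twistedStar_one_add_mul hM hNp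
  have hm := twistedStar_one_sub_mul hM hNm
  have hu₁ : IsUnit (1 + M * Np) := isUnit_one_add_mul_comm.2 h₁
  have hu₂ : IsUnit (1 - M * Nm) := isUnit_one_sub_mul_comm.2 h₂
  refine ⟨isUnit_twistedStar.1 (hp ▸ hu₂), isUnit_twistedStar.1 (hm ▸ hu₁), ?_⟩
  rw [transferFunction, transferFunction, twistedStar_mul, twistedStar_inverse, hp, hm]
  exact inverse_mul_mul_mul_inverse_eq_one hu₂ h₁ (one_add_mul_mul_one_sub_mul hMN hN)

theorem isUnit_Jmat (k : ℕ) : IsUnit (Jmat k) := by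
  rw [Jmat, Matrix.isUnit_diagonal, Pi.isUnit_iff]
  intro i
  split_ifs <;> simp

/-- Theorem 2: with `X~(s) := J⁻¹ X(−s̄)† J`, the non-Markovian transfer function
`G(s) = (I − N₋(s)M(s))(I + N₊(s)M(s))⁻¹` satisfies `G~(s)·G(s) = I` under the stated
symmetry and commutation conditions.  Here `M, N₊, N₋` are the values at `s` and
`M', N₊', N₋'` the values at `−s̄`. -/
theorem transfer_function_sim_unitary (k : ℕ) (hk : 1 ≤ k) (s : ℂ)
    (M Np Nm M' Np' Nm' : Matrix (Fin (2 * k)) (Fin (2 * k)) ℂ)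
    (hM : (Jmat k)⁻¹ * M'ᴴ * Jmat k = -M)
    (hNp : (Jmat k)⁻¹ * Np'ᴴ * Jmat k = Nm)
    (hNm : (Jmat k)⁻¹ * Nm'ᴴ * Jmat k = Np)
    (hc₁ : M * Np = Np * M) (hc₂ : M * Nm = Nm * M) (hc₃ : Np * Nm = Nm * Np)
    (h₁ : IsUnit (1 + Np * M)) (h₂ : IsUnit (1 - Nm * M)) :
    IsUnit (1 + Np' * M') ∧ IsUnit (1 - Nm' * M') ∧
      ((Jmat k)⁻¹ * ((1 - Nm' * M') * (1 + Np' * M')⁻¹)ᴴ * Jmat k) *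
        ((1 - Nm * M) * (1 + Np * M)⁻¹) = 1 := by
  obtain ⟨J, hJ⟩ := isUnit_Jmat k
  simp only [← hJ, nonsing_inv_eq_ringInverse, Ring.inverse_unit] at hM hNp hNm ⊢
  exact transfer_function_sim_unitary_general J hM hNp hNm (.add_right hc₁ hc₂) hc₃ h₁ h₂
end

section
/- (Theorem 2, ♭-unitarity on the imaginary axis.) Let k ≥ 1, let J denote the 2k×2k block-diagonal complex matrix with k copies of diag(i, −i), and for a 2k×2k complex matrix X write X♭ = J⁻¹X†J. Suppose M, N₊, N₋ are 2k×2k complex matrices with M♭ = −M, N₊♭ = N₋, satisfying the commutation conditions M·N₊ = N₊·M, M·N₋ = N₋·M, N₊·N₋ = N₋·N₊, and such that I + N₊·M and I − N₋·M are invertible. Then G = (I − N₋·M)(I + N₊·M)⁻¹ is ♭-unitary: G♭·G = I. -/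
open Matrix Complex

/-- The ♭-conjugate `X♭ = J⁻¹ X† J` of a `2k×2k` complex matrix. -/
noncomputable def flat (k : ℕ) (X : Matrix (Fin (2 * k)) (Fin (2 * k)) ℂ) :
    Matrix (Fin (2 * k)) (Fin (2 * k)) ℂ :=
  (Jmat k)⁻¹ * Xᴴ * Jmat k

/-!
With `♭` as the star, `G = A♭ A⁻¹` for `A = 1 + N₊ M`. A product of normal elements each commuting
with the other's star is normal, so `N₊ M`, and hence `A`, is normal; and for a unit `A` the
element `A♭ A⁻¹` is unitary exactly when `A A♭ = A♭ A`.
-/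

section StarRing

open scoped Ring

variable {R : Type*}

theorem star_mul_inv_mem_unitary [Monoid R] [StarMul R] (u : Rˣ) [IsStarNormal (u : R)] :
    star (u : R) * ↑u⁻¹ ∈ unitary R := by
  rw [← Units.coe_star, Units.mul_inv_mem_unitary, star_star]
  exact Units.ext (star_comm_self' (u : R)).symm

theorem isStarNormal_mul_of_commute_star [Semigroup R] [StarMul R] {a b : R} [IsStarNormal a]
    [IsStarNormal b] (hab : Commute a (star b)) : IsStarNormal (a * b) := by
  have hba : Commute (star a) b := by simpa only [star_star] using hab.star_star
  have ha : Commute (star a) (a * b) := star_comm_self.mul_right hba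
  have hb : Commute (star b) (a * b) := hab.symm.mul_right star_comm_self
  rw [isStarNormal_iff, star_mul]
  exact hb.mul_left ha

theorem transfer_function_flat_unitary_general [Ring R] [StarRing R] {M N : R}
    (hM : star M = -M) (hN : Commute (star N) N) (hMN : Commute M N)
    (hu : IsUnit (1 + N * M)) :
    (1 - star N * M) * (1 + N * M)⁻¹ʳ ∈ unitary R := by
  have hNM_star : Commute N (star M) := hM ▸ hMN.symm.neg_right
  have hN_normal : IsStarNormal N := ⟨hN⟩
  have hM_normal : IsStarNormal M := skewAdjoint.isStarNormal_of_mem hM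
  have hNM_normal : IsStarNormal (N * M) := isStarNormal_mul_of_commute_star hNM_star
  have h_star : star (1 + N * M) = 1 - star N * M := by
    rw [← hMN.eq, star_add, star_one, star_mul, hM, mul_neg, sub_eq_add_neg]
  obtain ⟨u, hu⟩ := hu
  have : IsStarNormal (u : R) := hu ▸ IsStarNormal.one_add
  rw [← h_star, ← hu, Ring.inverse_unit]
  exact star_mul_inv_mem_unitary u

/-- The adjoint involution `x ↦ J⁻¹ x* J` of the form `(x, y) ↦ x* J y` on a star ring, for a
unit `J`. Applying it twice conjugates `x` by `J⁻¹ J*`, so it is an involution exactly when `J⁻¹ J*`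
is central. -/
abbrev adjointStarRing [Ring R] [StarRing R] (J : Rˣ)
    (hJ : ((J⁻¹ * star J : Rˣ) : R) ∈ Subring.center R) : StarRing R where
  star x := ↑J⁻¹ * star x * J
  star_involutive x := calc
    ↑J⁻¹ * star (↑J⁻¹ * star x * ↑J) * ↑J
        = ((J⁻¹ * star J : Rˣ) : R) * x * ((J⁻¹ * star J)⁻¹ : Rˣ) := by
          simp only [star_mul, star_star, _root_.mul_inv_rev, inv_inv, Units.val_mul,
            Units.coe_star, Units.coe_star_inv, mul_assoc]
      _ = x := by rw [← Subring.mem_center_iff.mp hJ x, Units.mul_inv_cancel_right]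
  star_mul x y := by simp only [star_mul, mul_assoc, Units.mul_inv_cancel_left]
  star_add x y := by simp only [star_add, mul_add, add_mul]

end StarRing

theorem Jmat_mul_self (k : ℕ) : Jmat k * Jmat k = -1 := by
  rw [Jmat, diagonal_mul_diagonal, ← diagonal_one, diagonal_neg]
  congr 1
  ext i
  split_ifs <;> simp

theorem conjTranspose_Jmat (k : ℕ) : (Jmat k)ᴴ = -Jmat k := by
  rw [Jmat, diagonal_conjTranspose, diagonal_neg]
  congr 1
  ext i
  rw [Pi.star_apply]
  split_ifs <;> simp

theorem isUnit_det_Jmat (k : ℕ) : IsUnit (Jmat k).det :=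
  isUnit_det_of_right_inverse (B := -Jmat k) (by rw [mul_neg, Jmat_mul_self, neg_neg])

/-- The star ring structure on `2k×2k` complex matrices whose star is definitionally `flat k`. -/
noncomputable abbrev flatStarRing (k : ℕ) : StarRing (Matrix (Fin (2 * k)) (Fin (2 * k)) ℂ) :=
  adjointStarRing (nonsingInvUnit (Jmat k) (isUnit_det_Jmat k)) (by
    have hJ : star (nonsingInvUnit (Jmat k) (isUnit_det_Jmat k)) =
        -nonsingInvUnit (Jmat k) (isUnit_det_Jmat k) := Units.ext (conjTranspose_Jmat k)
    rw [hJ, mul_neg, inv_mul_cancel]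
    exact neg_mem (one_mem _))

/-- Theorem 2 evaluated on the imaginary axis: if `M♭ = −M`, `N₊♭ = N₋`, the matrices
`M, N₊, N₋` pairwise commute as stated, and `I + N₊M`, `I − N₋M` are invertible, then the
transfer function `G = (I − N₋M)(I + N₊M)⁻¹` is ♭-unitary: `G♭·G = I`. -/
theorem transfer_function_flat_unitary (k : ℕ) (hk : 1 ≤ k)
    (M Np Nm : Matrix (Fin (2 * k)) (Fin (2 * k)) ℂ)
    (hM : flat k M = -M) (hNp : flat k Np = Nm)
    (hc₁ : M * Np = Np * M) (hc₂ : M * Nm = Nm * M) (hc₃ : Np * Nm = Nm * Np)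
    (h₁ : IsUnit (1 + Np * M)) (h₂ : IsUnit (1 - Nm * M)) :
    flat k ((1 - Nm * M) * (1 + Np * M)⁻¹) * ((1 - Nm * M) * (1 + Np * M)⁻¹) = 1 := by
  subst hNp
  rw [nonsing_inv_eq_ringInverse]
  -- The instance is explicit because the default star on matrices is the conjugate transpose.
  exact (@transfer_function_flat_unitary_general _ _ (flatStarRing k) M Np hM hc₃.symm hc₁ h₁).1
end
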